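/- Let T be a k-subalgebra of k[X] contained in the kernel of the Weitzenböck derivation d, such that x_0 ∈ T and such that for every nonzero homogeneous polynomial z ∈ T with d(z) = 0 that is an e-eigenvector with eigenvalue w ∈ ℕ, and for every 0 ≤ i ≤ min(n, w), the Casimir element τ_i(z) belongs to T. Then T equals the whole kernel of d: T = k[X]^d. -/

import Mathlib

open MvPolynomial Finset

/-- The Weitzenböck derivation `d` on `k[x_0,…,x_n]`: `d(x_i) = x_{i-1}` for
`1 ≤ i ≤ n` and `d(x_0) = 0`. -/
noncomputable def weitz (k : Type*) [Field k] [CharZero k] (n : ℕ) :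
    Derivation k (MvPolynomial (Fin (n + 1)) k) (MvPolynomial (Fin (n + 1)) k) :=
  mkDerivation k (fun i : Fin (n + 1) =>
    if _ : (i : ℕ) = 0 then 0
    else X (⟨(i : ℕ) - 1, by have := i.isLt; omega⟩ : Fin (n + 1)))

/-- The derivation `d̂` on `k[x_0,…,x_n]`: `d̂(x_i) = (i+1)(n−i)·x_{i+1}` for
`0 ≤ i ≤ n−1` and `d̂(x_n) = 0`. -/
noncomputable def dhat (k : Type*) [Field k] [CharZero k] (n : ℕ) :
    Derivation k (MvPolynomial (Fin (n + 1)) k) (MvPolynomial (Fin (n + 1)) k) :=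
  mkDerivation k (fun i : Fin (n + 1) =>
    if h : (i : ℕ) = n then 0
    else ((((i : ℕ) + 1) * (n - (i : ℕ)) : ℕ) : k) •
      X (⟨(i : ℕ) + 1, by have := i.isLt; omega⟩ : Fin (n + 1)))

/-- The derivation `e` on `k[x_0,…,x_n]`: `e(x_i) = (n−2i)·x_i`. -/
noncomputable def ee (k : Type*) [Field k] [CharZero k] (n : ℕ) :
    Derivation k (MvPolynomial (Fin (n + 1)) k) (MvPolynomial (Fin (n + 1)) k) :=
  mkDerivation k (fun i : Fin (n + 1) => ((n : ℤ) - 2 * (i : ℕ)) • X i)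

/-- The Casimir element `τ_i(z) = Σ_{k=0}^{i} (−1)^k ((w−k)!/(k!·w!)) x_{i−k} d̂^k(z)`
associated to a kernel element `z` of weight `w`, for `i ≤ n`. -/
noncomputable def tau (k : Type*) [Field k] [CharZero k] (n w i : ℕ) (hi : i ≤ n)
    (z : MvPolynomial (Fin (n + 1)) k) : MvPolynomial (Fin (n + 1)) k :=
  ∑ j ∈ Finset.range (i + 1),
    ((-1 : k) ^ j * ((w - j).factorial : k) / ((j.factorial * w.factorial : ℕ) : k)) •
      (X (⟨i - j, by omega⟩ : Fin (n + 1)) * (⇑(dhat k n))^[j] z)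

/-!
Let `p` be a kernel element of `d`, homogeneous of degree `m + 1`. Since `[d, ∂_i] = -∂_{i+1}`, the
polynomial `g = ∂_0 p` satisfies `d^i(g) = (-1)^i ∂_i p`, so Euler's identity gives
`Σ_i (-1)^i x_i d^i(g) = (m + 1) p`. As `(e, d, d̂)` is an `sl₂`-triple and `d^(n+1)(g) = 0`, the
weight components of `g` are sums of elements `d̂^r(z)` with `r ≤ n`, where `z` is a kernel element
of degree `m` and weight at least `r`. The operator `Σ_i (-1)^i x_i d^i` sends `d̂^r(z)` to a
multiple of `τ_r(z)`. By induction on the degree, `z`, hence `τ_r(z)`, hence `p`, lies in `T`.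
-/

section Sl2

open LieModule

variable {R L M : Type*} [CommRing R] [LieRing L] [LieAlgebra R L]
  [AddCommGroup M] [Module R M] [LieRingModule L M] [LieModule R L M] {h e f : L} {x : M}

theorem toEnd_e_pow_succ_lie_f (t : IsSl2Triple h e f) {μ : R} (hx : ⁅h, x⁆ = μ • x) (s : ℕ) :
    (toEnd R L M e ^ (s + 1)) ⁅f, x⁆ =
      ⁅f, (toEnd R L M e ^ (s + 1)) x⁆ + ((s + 1) * (μ + s)) • (toEnd R L M e ^ s) x := by
  induction s with
  | zero => simp [leibniz_lie e, t.lie_e_f, hx, add_comm]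
  | succ s ih =>
    rw [← IsSl2Triple.lie_e_pow_toEnd_e, ih, lie_add, leibniz_lie e,
      t.lie_e_f, t.lie_h_pow_toEnd_e hx, lie_smul]
    simp only [IsSl2Triple.lie_e_pow_toEnd_e]
    push_cast
    module

theorem lie_h_toEnd_f_pow (t : IsSl2Triple h e f) {μ : R} (hx : ⁅h, x⁆ = μ • x) (j : ℕ) :
    ⁅h, (toEnd R L M f ^ j) x⁆ = (μ - 2 * j) • (toEnd R L M f ^ j) x := by
  have hneg : ⁅-h, x⁆ = (-μ) • x := by rw [neg_lie, hx, neg_smul]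
  have hsymm := t.symm.lie_h_pow_toEnd_e hneg j
  rw [neg_lie, neg_eq_iff_eq_neg] at hsymm
  rw [hsymm]
  module

theorem toEnd_e_pow_toEnd_f_pow_eq_zero (t : IsSl2Triple h e f) {μ : R} (hx : ⁅h, x⁆ = μ • x)
    {s : ℕ} (hs : (toEnd R L M e ^ s) x = 0) (j : ℕ) :
    (toEnd R L M e ^ (s + j)) ((toEnd R L M f ^ j) x) = 0 := by
  induction j with
  | zero => simpa using hs
  | succ j ih =>
    rw [pow_succ' (toEnd R L M f), Module.End.mul_apply, toEnd_apply_apply, ← add_assoc,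
      toEnd_e_pow_succ_lie_f t (lie_h_toEnd_f_pow t hx j), pow_succ' (toEnd R L M e),
      Module.End.mul_apply, ih, map_zero, lie_zero, smul_zero, add_zero]

theorem toEnd_e_pow_toEnd_f_pow {t : IsSl2Triple h e f} {r v : ℕ}
    (P : t.HasPrimitiveVectorWith x ((r + v : ℕ) : R)) (l : ℕ) :
    (toEnd R L M e ^ l) ((toEnd R L M f ^ r) x) =
      ((r.descFactorial l * (v + 1).ascFactorial l : ℕ) : R) • (toEnd R L M f ^ (r - l)) x := by
  induction l with
  | zero => simp
  | succ l ih =>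
    rw [pow_succ', Module.End.mul_apply, ih, map_smul, toEnd_apply_apply]
    rcases lt_or_ge l r with hl | hl
    · obtain ⟨j, rfl⟩ := Nat.exists_eq_add_of_lt hl
      rw [show l + j + 1 - l = j + 1 by omega, show l + j + 1 - (l + 1) = j by omega,
        P.lie_e_pow_succ_toEnd_f, smul_smul, Nat.descFactorial_succ, Nat.ascFactorial_succ,
        show l + j + 1 - l = j + 1 by omega]
      congr 1
      push_cast
      ring
    · rw [Nat.sub_eq_zero_of_le hl, pow_zero, Module.End.one_apply, P.lie_e, smul_zero,
        Nat.descFactorial_of_lt (Nat.lt_succ_of_le hl), zero_mul, Nat.cast_zero, zero_smul]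

variable [IsDomain R] [CharZero R] [Module.IsTorsionFree R M]

theorem eq_zero_of_toEnd_e_pow_eq_zero (t : IsSl2Triple h e f)
    (hf : ∃ N, (toEnd R L M f ^ N) x = 0) {u : ℤ} (hx : ⁅h, x⁆ = (u : R) • x) {s : ℕ}
    (hus : u ≤ -s) (hs : (toEnd R L M e ^ s) x = 0) : x = 0 := by
  -- Otherwise the last nonzero `f ^ j x` is a lowest weight vector of weight `-l`, which `e` raises
  -- `l` times without killing it; but `e ^ (s + j)` kills it, and `s + j ≤ l`.
  by_contra hx0
  obtain ⟨j, hj, hj'⟩ := Nat.exists_not_and_succ_of_not_zero_of_exists (by simpa using hx0) hf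
  obtain ⟨l, hl⟩ := Int.eq_ofNat_of_zero_le (show 0 ≤ 2 * j - u by omega)
  have lowest : t.symm.HasPrimitiveVectorWith ((toEnd R L M f ^ j) x) (l : R) :=
    { ne_zero := hj
      lie_h := by
        rw [neg_lie, lie_h_toEnd_f_pow t hx, ← neg_smul, ← Int.cast_natCast l, ← hl]
        congr 1
        push_cast
        ring
      lie_e := by rwa [pow_succ', Module.End.mul_apply] at hj' }
  exact lowest.pow_toEnd_f_ne_zero_of_eq_nat rfl (show s + j ≤ l by omega)
    (toEnd_e_pow_toEnd_f_pow_eq_zero t hx hs j)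

theorem exists_hasPrimitiveVectorWith_toEnd_e_pow (t : IsSl2Triple h e f)
    (hf : ∃ N, (toEnd R L M f ^ N) x = 0) {u : ℤ} (hx : ⁅h, x⁆ = (u : R) • x) {r : ℕ}
    (hr : (toEnd R L M e ^ (r + 1)) x = 0) (hne : (toEnd R L M e ^ r) x ≠ 0) :
    ∃ v : ℕ, u + r = v ∧ t.HasPrimitiveVectorWith ((toEnd R L M e ^ r) x) ((r + v : ℕ) : R) := by
  have weight_nonneg : 0 ≤ u + r := by
    by_contra! hlt
    exact hne (by rw [eq_zero_of_toEnd_e_pow_eq_zero t hf hx (by omega) hr, map_zero])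
  obtain ⟨v, hv⟩ := Int.eq_ofNat_of_zero_le weight_nonneg
  refine ⟨v, hv, hne, ?_, by rwa [IsSl2Triple.lie_e_pow_toEnd_e]⟩
  rw [t.lie_h_pow_toEnd_e hx, ← Int.cast_natCast (r + v), Nat.cast_add, ← hv]
  push_cast
  congr 1
  ring

theorem mem_of_toEnd_e_pow_eq_zero {K M : Type*} [Field K] [CharZero K] [LieAlgebra K L]
    [AddCommGroup M] [Module K M] [LieRingModule L M] [LieModule K L M]
    (t : IsSl2Triple h e f) (exists_pow_f : ∀ y : M, ∃ N, (toEnd K L M f ^ N) y = 0)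
    {H S : Submodule K M} (lie_e_mem : ∀ y ∈ H, ⁅e, y⁆ ∈ H) (lie_f_mem : ∀ y ∈ H, ⁅f, y⁆ ∈ H)
    {N : ℕ} (mem_S : ∀ r < N, ∀ v : ℕ, ∀ y ∈ H, ⁅h, y⁆ = ((r + v : ℕ) : K) • y → ⁅e, y⁆ = 0 →
      (toEnd K L M f ^ r) y ∈ S)
    {u : ℤ} {x : M} (hxH : x ∈ H) (hx : ⁅h, x⁆ = (u : K) • x)
    (hN : (toEnd K L M e ^ N) x = 0) : x ∈ S := by
  -- With `e ^ (r + 1) x = 0`, the vector `y = e ^ r x` is primitive, and subtracting from `x` the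
  -- multiple of `f ^ r y` with the same image under `e ^ r` lowers the exponent.
  induction N generalizing x with
  | zero => simp_all
  | succ r ih =>
    replace ih := @ih fun s hs ↦ mem_S s (hs.trans r.lt_succ_self)
    rcases eq_or_ne ((toEnd K L M e ^ r) x) 0 with hy | hy
    · exact ih hxH hx hy
    obtain ⟨v, hv, primitive⟩ :=
      exists_hasPrimitiveVectorWith_toEnd_e_pow t (exists_pow_f x) hx hN hy
    set y := (toEnd K L M e ^ r) x with hy_def
    set c : K := ((r.descFactorial r * (v + 1).ascFactorial r : ℕ) : K) with hc_def
    have hc : c ≠ 0 := by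
      rw [hc_def, Nat.cast_ne_zero, Nat.descFactorial_self]
      positivity
    have hyH : y ∈ H := Module.End.pow_apply_mem_of_forall_mem r lie_e_mem x hxH
    have string_mem := mem_S r r.lt_succ_self v y hyH primitive.lie_h primitive.lie_e
    rw [← sub_add_cancel x (c⁻¹ • (toEnd K L M f ^ r) y)]
    refine S.add_mem (ih (H.sub_mem hxH ?_) ?_ ?_) (S.smul_mem _ string_mem)
    · exact H.smul_mem _ (Module.End.pow_apply_mem_of_forall_mem r lie_f_mem y hyH)
    · rw [lie_sub, lie_smul, hx, lie_h_toEnd_f_pow t primitive.lie_h, ← Int.cast_natCast (r + v),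
        Nat.cast_add, ← hv]
      push_cast
      module
    · rw [map_sub, map_smul, toEnd_e_pow_toEnd_f_pow primitive, ← hy_def, ← hc_def, Nat.sub_self,
        pow_zero, Module.End.one_apply, inv_smul_smul₀ hc, sub_self]

end Sl2

theorem toEnd_derivation_pow_apply {R A : Type*} [CommRing R] [CommRing A] [Algebra R A]
    (D : Derivation R A A) (r : ℕ) (a : A) :
    (LieModule.toEnd R (Derivation R A A) A D ^ r) a = D^[r] a := by
  rw [Module.End.pow_apply]
  rfl

theorem mem_of_forall_weightedHomogeneousComponent_mem {σ R M : Type*} [CommSemiring R]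
    [AddCommMonoid M] (w : σ → M) {T : Submodule R (MvPolynomial σ R)} {p : MvPolynomial σ R}
    (hp : ∀ c, weightedHomogeneousComponent w c p ∈ T) : p ∈ T := by
  rw [← finsum_weightedHomogeneousComponent w p]
  exact finsum_induction (· ∈ T) T.zero_mem (fun _ _ ↦ T.add_mem) hp

section GradedDerivation

variable {σ R M : Type*} [CommSemiring R] {w : σ → M}
  {D : Derivation R (MvPolynomial σ R) (MvPolynomial σ R)}

theorem derivation_monomial (D : Derivation R (MvPolynomial σ R) (MvPolynomial σ R))
    (d : σ →₀ ℕ) (r : R) :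
    D (monomial d r) =
      r • d.sum fun i a ↦ monomial (d - Finsupp.single i 1) (a : R) * D (X i) := by
  have hD : D = mkDerivation R fun i ↦ D (X i) := derivation_ext fun i ↦ by rw [mkDerivation_X]
  conv_lhs => rw [hD]
  exact mkDerivation_monomial R _ d r

theorem isWeightedHomogeneous_derivation [AddCommMonoid M] {δ : M}
    (hD : ∀ i, IsWeightedHomogeneous w (D (X i)) (w i + δ)) {p : MvPolynomial σ R} {c : M}
    (hp : IsWeightedHomogeneous w p c) : IsWeightedHomogeneous w (D p) (c + δ) := by
  induction hp using IsWeightedHomogeneous.induction_on with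
  | zero => simpa using isWeightedHomogeneous_zero R w (c + δ)
  | add p q hp hq ihp ihq => simpa using ihp.add ihq
  | monomial d r hd =>
    rw [derivation_monomial]
    refine Submodule.smul_mem (weightedHomogeneousSubmodule R w (c + δ)) r
      (IsWeightedHomogeneous.sum _ _ _ fun i hi ↦ ?_)
    have weight_eq : Finsupp.weight w (d - Finsupp.single i 1) + (w i + δ) = c + δ := by
      rw [← add_assoc, Finsupp.weight_sub_single_add (Finsupp.mem_support_iff.mp hi), hd]
    exact weight_eq ▸ (isWeightedHomogeneous_monomial w _ _ rfl).mul (hD i)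

theorem isHomogeneous_derivation (hD : ∀ i, (D (X i)).IsHomogeneous 1) {p : MvPolynomial σ R}
    {m : ℕ} (hp : p.IsHomogeneous m) : (D p).IsHomogeneous m :=
  isWeightedHomogeneous_derivation (w := 1) (δ := 0) hD hp

theorem derivation_apply_of_isWeightedHomogeneous [AddCommMonoid M] (χ : M →+ R)
    (hD : ∀ i, D (X i) = χ (w i) • X i) {p : MvPolynomial σ R} {c : M}
    (hp : IsWeightedHomogeneous w p c) : D p = χ c • p := by
  induction hp using IsWeightedHomogeneous.induction_on with
  | zero => simp
  | add p q hp hq ihp ihq => rw [map_add, ihp, ihq, smul_add]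
  | monomial d r hd =>
    have term_eq (i : σ) (hi : i ∈ d.support) :
        monomial (d - Finsupp.single i 1) (d i : R) * D (X i) =
          (d i • χ (w i)) • monomial d 1 := by
      rw [hD, mul_smul_comm, X, monomial_mul,
        Finsupp.sub_add_single_one_cancel (Finsupp.mem_support_iff.mp hi), smul_monomial,
        smul_monomial]
      congr 1
      simp [mul_comm]
    rw [derivation_monomial, Finsupp.sum, Finset.sum_congr rfl term_eq, ← Finset.sum_smul,
      smul_comm, smul_monomial, smul_eq_mul, mul_one, ← hd, Finsupp.weight_apply,
      map_finsuppSum]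
    simp only [Finsupp.sum, map_nsmul]

theorem derivation_weightedHomogeneousComponent [AddCancelCommMonoid M] {δ : M}
    (hD : ∀ i, IsWeightedHomogeneous w (D (X i)) (w i + δ)) (c : M) (p : MvPolynomial σ R) :
    D (weightedHomogeneousComponent w c p) = weightedHomogeneousComponent w (c + δ) (D p) := by
  classical
  induction p using MvPolynomial.induction_on' with
  | monomial d r =>
    have hd := isWeightedHomogeneous_monomial w d r rfl
    rw [weightedHomogeneousComponent_of_mem hd,
      weightedHomogeneousComponent_of_mem (isWeightedHomogeneous_derivation hD hd)]
    simp only [add_left_inj]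
    split_ifs <;> simp
  | add p q hp hq => simp only [map_add, hp, hq]

theorem derivation_homogeneousComponent (hD : ∀ i, (D (X i)).IsHomogeneous 1) (m : ℕ)
    (p : MvPolynomial σ R) : D (homogeneousComponent m p) = homogeneousComponent m (D p) :=
  derivation_weightedHomogeneousComponent (w := 1) (δ := 0) hD m p

theorem isHomogeneous_weightedHomogeneousComponent [AddCommMonoid M] {p : MvPolynomial σ R}
    {m : ℕ} (hp : p.IsHomogeneous m) (c : M) :
    (weightedHomogeneousComponent w c p).IsHomogeneous m := by
  classical
  intro d hd
  rw [coeff_weightedHomogeneousComponent] at hd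
  exact hp (fun h ↦ hd (by rw [h, ite_self]))

end GradedDerivation

/-- The weight `n - 2i` of the variable `x_i`, i.e. its eigenvalue under `e`. -/
def varWeight (n : ℕ) (i : Fin (n + 1)) : ℤ := n - 2 * i

theorem neg_mul_le_of_isWeightedHomogeneous_varWeight {R : Type*} [CommSemiring R] {n m : ℕ}
    {u : ℤ} {p : MvPolynomial (Fin (n + 1)) R} (hm : p.IsHomogeneous m)
    (hu : IsWeightedHomogeneous (varWeight n) p u) (hne : p ≠ 0) : -(n * m : ℤ) ≤ u := by
  obtain ⟨d, hd⟩ := MvPolynomial.ne_zero_iff.mp hne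
  rw [← hm hd, ← hu hd, Finsupp.weight_apply, Finsupp.weight_apply, Finsupp.sum, Finsupp.sum,
    Nat.cast_sum, Finset.mul_sum, ← Finset.sum_neg_distrib]
  refine Finset.sum_le_sum fun i _ ↦ ?_
  have := i.is_le
  simp only [varWeight, Pi.one_apply, smul_eq_mul, mul_one, nsmul_eq_mul]
  nlinarith

section Weitzenboeck

variable {k : Type*} [Field k] [CharZero k] {n : ℕ}

theorem weitz_X_zero : weitz k n (X 0) = 0 := by
  simp [weitz, mkDerivation_X]

theorem weitz_X_succ (i : Fin n) : weitz k n (X i.succ) = X i.castSucc := by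
  simp [weitz, mkDerivation_X, Fin.castSucc, Fin.castAdd, Fin.castLE]

theorem dhat_X_last : dhat k n (X (Fin.last n)) = 0 := by
  simp [dhat, mkDerivation_X]

theorem dhat_X_castSucc (i : Fin n) :
    dhat k n (X i.castSucc) = ((i + 1) * (n - i) : k) • X i.succ := by
  simp [dhat, mkDerivation_X, i.isLt.ne, Nat.cast_sub i.isLt.le, Fin.succ]

theorem ee_X (i : Fin (n + 1)) : ee k n (X i) = (n - 2 * i : k) • X i := by
  rw [ee, mkDerivation_X, ← Int.cast_smul_eq_zsmul k]
  push_cast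
  rfl

theorem weitz_dhat_X (i : Fin (n + 1)) :
    weitz k n (dhat k n (X i)) = ((i + 1) * (n - i) : k) • X i := by
  cases i using Fin.lastCases with
  | last => simp [dhat_X_last]
  | cast i => rw [dhat_X_castSucc, Derivation.map_smul, weitz_X_succ, Fin.val_castSucc]

theorem dhat_weitz_X (i : Fin (n + 1)) :
    dhat k n (weitz k n (X i)) = (i * (n - i + 1) : k) • X i := by
  cases i using Fin.cases with
  | zero => simp [weitz_X_zero]
  | succ i =>
    rw [weitz_X_succ, dhat_X_castSucc, Fin.val_succ]
    push_cast
    congr 1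
    ring

theorem isSl2Triple_weitz (hn : n ≠ 0) : IsSl2Triple (ee k n) (weitz k n) (dhat k n) where
  h_ne_zero h := by
    have ee_X_zero : (n : k) • (X 0 : MvPolynomial (Fin (n + 1)) k) = 0 := by
      simpa [h] using (ee_X (k := k) (0 : Fin (n + 1))).symm
    exact (smul_eq_zero.mp ee_X_zero).elim (Nat.cast_ne_zero.mpr hn) (X_ne_zero 0)
  lie_e_f := by
    refine derivation_ext fun i ↦ ?_
    rw [Derivation.commutator_apply, weitz_dhat_X, dhat_weitz_X, ee_X]
    module
  lie_h_e_nsmul := by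
    refine derivation_ext fun i ↦ ?_
    rw [Derivation.commutator_apply, ee_X, Derivation.map_smul, Derivation.smul_apply]
    cases i using Fin.cases with
    | zero => simp [weitz_X_zero]
    | succ i =>
      rw [weitz_X_succ, ee_X, Fin.val_succ, Fin.val_castSucc]
      push_cast
      module
  lie_h_f_nsmul := by
    refine derivation_ext fun i ↦ ?_
    rw [Derivation.commutator_apply, ee_X, Derivation.map_smul, Derivation.neg_apply,
      Derivation.smul_apply]
    cases i using Fin.lastCases with
    | last => simp [dhat_X_last]
    | cast i =>
      rw [dhat_X_castSucc, Derivation.map_smul, ee_X, Fin.val_succ, Fin.val_castSucc]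
      push_cast
      module

theorem isWeightedHomogeneous_weitz_X (i : Fin (n + 1)) :
    IsWeightedHomogeneous (varWeight n) (weitz k n (X i)) (varWeight n i + 2) := by
  cases i using Fin.cases with
  | zero => simpa [weitz_X_zero] using isWeightedHomogeneous_zero k _ _
  | succ i =>
    have varWeight_eq : varWeight n i.succ + 2 = varWeight n i.castSucc := by
      rw [varWeight, varWeight, Fin.val_succ, Fin.val_castSucc, Nat.cast_succ]
      ring
    rw [weitz_X_succ, varWeight_eq]
    exact isWeightedHomogeneous_X k _ _

theorem isWeightedHomogeneous_dhat_X (i : Fin (n + 1)) :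
    IsWeightedHomogeneous (varWeight n) (dhat k n (X i)) (varWeight n i + -2) := by
  cases i using Fin.lastCases with
  | last => simpa [dhat_X_last] using isWeightedHomogeneous_zero k _ _
  | cast i =>
    have varWeight_eq : varWeight n i.castSucc + -2 = varWeight n i.succ := by
      rw [varWeight, varWeight, Fin.val_succ, Fin.val_castSucc, Nat.cast_succ]
      ring
    rw [dhat_X_castSucc, varWeight_eq]
    exact Submodule.smul_mem (weightedHomogeneousSubmodule k _ _) _ (isWeightedHomogeneous_X k _ _)

theorem ee_apply_of_isWeightedHomogeneous {p : MvPolynomial (Fin (n + 1)) k} {u : ℤ}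
    (hp : IsWeightedHomogeneous (varWeight n) p u) : ee k n p = (u : k) • p :=
  derivation_apply_of_isWeightedHomogeneous (Int.castAddHom k)
    (fun i ↦ by simp [ee_X, varWeight]) hp

theorem isHomogeneous_weitz_X (i : Fin (n + 1)) : (weitz k n (X i)).IsHomogeneous 1 := by
  cases i using Fin.cases with
  | zero => simpa [weitz_X_zero] using isHomogeneous_zero _ k 1
  | succ i => simpa [weitz_X_succ] using isHomogeneous_X k _

theorem isHomogeneous_dhat_X (i : Fin (n + 1)) : (dhat k n (X i)).IsHomogeneous 1 := by
  cases i using Fin.lastCases with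
  | last => simpa [dhat_X_last] using isHomogeneous_zero _ k 1
  | cast i =>
    rw [dhat_X_castSucc]
    exact Submodule.smul_mem (homogeneousSubmodule _ k 1) _ (isHomogeneous_X k _)

theorem exists_iterate_dhat_eq_zero (p : MvPolynomial (Fin (n + 1)) k) :
    ∃ N, (dhat k n)^[N] p = 0 := by
  suffices p ∈ Module.End.maxGenEigenspace (dhat k n : Module.End k _) 0 by
    simpa [Module.End.mem_maxGenEigenspace, Module.End.pow_apply] using this
  induction p using MvPolynomial.induction_on' with
  | add p q hp hq => exact Submodule.add_mem _ hp hq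
  | monomial d r =>
    set m := d.degree
    set u := Finsupp.weight (varWeight n) d
    have homogeneous (N : ℕ) : ((dhat k n)^[N] (monomial d r)).IsHomogeneous m := by
      induction N with
      | zero => exact isHomogeneous_monomial r rfl
      | succ N ih =>
        rw [Function.iterate_succ_apply']
        exact isHomogeneous_derivation isHomogeneous_dhat_X ih
    have weight (N : ℕ) :
        IsWeightedHomogeneous (varWeight n) ((dhat k n)^[N] (monomial d r)) (u - 2 * N) := by
      induction N with
      | zero => simpa using isWeightedHomogeneous_monomial (varWeight n) d r rfl
      | succ N ih =>
        rw [Function.iterate_succ_apply', Nat.cast_succ, mul_add_one, ← sub_sub]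
        exact isWeightedHomogeneous_derivation isWeightedHomogeneous_dhat_X ih
    simp only [Module.End.mem_maxGenEigenspace, zero_smul, sub_zero, Module.End.pow_apply]
    refine ⟨(n * m + u).toNat + 1, by_contra fun hne ↦ ?_⟩
    have := neg_mul_le_of_isWeightedHomogeneous_varWeight (homogeneous _) (weight _) hne
    have := Int.self_le_toNat (n * m + u)
    omega

theorem weitz_pderiv_castSucc (i : Fin n) (p : MvPolynomial (Fin (n + 1)) k) :
    weitz k n (pderiv i.castSucc p) = pderiv i.castSucc (weitz k n p) - pderiv i.succ p := by
  have commutator_eq : ⁅weitz k n, pderiv (R := k) i.castSucc⁆ = -pderiv i.succ := by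
    refine derivation_ext fun j ↦ ?_
    rw [Derivation.commutator_apply, Derivation.neg_apply]
    cases j using Fin.cases with
    | zero => simp [weitz_X_zero, pderiv_X, Pi.single_apply, apply_ite]
    | succ j => simp [weitz_X_succ, pderiv_X, Pi.single_apply, apply_ite]
  have commutator_apply := DFunLike.congr_fun commutator_eq p
  rw [Derivation.commutator_apply, Derivation.neg_apply] at commutator_apply
  linear_combination commutator_apply

theorem weitz_pderiv_last (p : MvPolynomial (Fin (n + 1)) k) :
    weitz k n (pderiv (Fin.last n) p) = pderiv (Fin.last n) (weitz k n p) := by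
  have commutator_eq : ⁅weitz k n, pderiv (R := k) (Fin.last n)⁆ = 0 := by
    refine derivation_ext fun j ↦ ?_
    rw [Derivation.commutator_apply]
    cases j using Fin.cases with
    | zero => simp [weitz_X_zero, pderiv_X, Pi.single_apply, apply_ite]
    | succ j => simp [weitz_X_succ, pderiv_X, Pi.single_apply, apply_ite]
  rw [← sub_eq_zero, ← Derivation.commutator_apply, commutator_eq, Derivation.zero_apply]

theorem iterate_weitz_pderiv_zero {p : MvPolynomial (Fin (n + 1)) k} (hp : weitz k n p = 0)
    (i : Fin (n + 1)) : (weitz k n)^[i] (pderiv 0 p) = (-1 : k) ^ (i : ℕ) • pderiv i p := by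
  induction i using Fin.induction with
  | zero => simp
  | succ i ih =>
    rw [Fin.val_succ, Function.iterate_succ_apply', ← Fin.val_castSucc, ih, Derivation.map_smul,
      weitz_pderiv_castSucc, hp, map_zero, zero_sub, smul_neg, pow_succ, mul_neg_one, neg_smul]

theorem iterate_weitz_pderiv_zero_eq_zero {p : MvPolynomial (Fin (n + 1)) k}
    (hp : weitz k n p = 0) : (weitz k n)^[n + 1] (pderiv 0 p) = 0 := by
  have iterate_last := iterate_weitz_pderiv_zero hp (Fin.last n)
  rw [Fin.val_last] at iterate_last
  rw [Function.iterate_succ_apply', iterate_last, Derivation.map_smul, weitz_pderiv_last, hp,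
    map_zero, smul_zero]

variable (k n) in
/-- The map `g ↦ Σ_i (-1)^i x_i d^i(g)`. It recovers a kernel element from its partial derivative
with respect to `x_0`, and it produces the Casimir elements of a primitive vector from the
`d̂`-string through it. -/
noncomputable def weitzContraction :
    MvPolynomial (Fin (n + 1)) k →ₗ[k] MvPolynomial (Fin (n + 1)) k :=
  ∑ i : Fin (n + 1), (-1 : k) ^ (i : ℕ) •
    LinearMap.mulLeft k (X i) ∘ₗ (weitz k n : Module.End k _) ^ (i : ℕ)

theorem weitzContraction_apply (p : MvPolynomial (Fin (n + 1)) k) :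
    weitzContraction k n p =
      ∑ i : Fin (n + 1), (-1 : k) ^ (i : ℕ) • (X i * (weitz k n)^[i] p) := by
  simp [weitzContraction, Module.End.pow_apply]

theorem weitzContraction_pderiv_zero {p : MvPolynomial (Fin (n + 1)) k} {m : ℕ}
    (hp : p.IsHomogeneous m) (hker : weitz k n p = 0) :
    weitzContraction k n (pderiv 0 p) = (m : k) • p := by
  rw [weitzContraction_apply, Nat.cast_smul_eq_nsmul, ← hp.sum_X_mul_pderiv]
  refine Finset.sum_congr rfl fun i _ ↦ ?_
  rw [iterate_weitz_pderiv_zero hker, mul_smul_comm, smul_smul, ← mul_pow, neg_one_mul, neg_neg,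
    one_pow, one_smul]

theorem iterate_weitz_iterate_dhat (hn : n ≠ 0) {z : MvPolynomial (Fin (n + 1)) k} {r v : ℕ}
    (hker : weitz k n z = 0) (hz : ee k n z = ((r + v : ℕ) : k) • z) (l : ℕ) :
    (weitz k n)^[l] ((dhat k n)^[r] z) =
      ((r.descFactorial l * (v + 1).ascFactorial l : ℕ) : k) • (dhat k n)^[r - l] z := by
  rcases eq_or_ne z 0 with rfl | hne
  · simp [iterate_map_zero]
  have primitive : (isSl2Triple_weitz (k := k) hn).HasPrimitiveVectorWith z ((r + v : ℕ) : k) :=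
    ⟨hne, hz, hker⟩
  simpa only [toEnd_derivation_pow_apply] using toEnd_e_pow_toEnd_f_pow primitive l

-- Compares the coefficients of `x_l d̂^j(z)` in `weitzContraction_iterate_dhat`, where `r = j + l`.
theorem tau_coeff_mul (v j l : ℕ) :
    ((-1) ^ (j + l) * ((j + l).factorial * (v + 1).ascFactorial (j + l) : ℕ) : k) *
        ((-1) ^ j * (j + l + v - j).factorial / (j.factorial * (j + l + v).factorial : ℕ)) =
      (-1) ^ l * ((j + l).descFactorial l * (v + 1).ascFactorial l : ℕ) := by
  have factorial_jl := Nat.factorial_mul_descFactorial (Nat.le_add_left l j)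
  rw [Nat.add_sub_cancel] at factorial_jl
  rw [show j + l + v - j = v + l by omega, show j + l + v = v + (j + l) by omega, ← factorial_jl,
    ← Nat.factorial_mul_ascFactorial v l, ← Nat.factorial_mul_ascFactorial v (j + l)]
  have sign_eq : (-1 : k) ^ (j + l) * (-1) ^ j = (-1) ^ l := by
    rw [pow_add, mul_right_comm, ← mul_pow, neg_one_mul, neg_neg, one_pow, one_mul]
  have hj : (j.factorial : k) ≠ 0 := Nat.cast_ne_zero.mpr j.factorial_ne_zero
  have hv : (v.factorial : k) ≠ 0 := Nat.cast_ne_zero.mpr v.factorial_ne_zero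
  have hasc : ((v + 1).ascFactorial (j + l) : k) ≠ 0 :=
    Nat.cast_ne_zero.mpr (Nat.ascFactorial_pos v (j + l)).ne'
  rw [← sign_eq]
  push_cast
  field_simp

theorem weitzContraction_iterate_dhat (hn : n ≠ 0) {z : MvPolynomial (Fin (n + 1)) k} {r v : ℕ}
    (hr : r ≤ n) (hker : weitz k n z = 0) (hz : ee k n z = ((r + v : ℕ) : k) • z) :
    weitzContraction k n ((dhat k n)^[r] z) =
      ((-1) ^ r * (r.factorial * (v + 1).ascFactorial r : ℕ) : k) • tau k n (r + v) r hr z := by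
  simp only [weitzContraction_apply, iterate_weitz_iterate_dhat hn hker hz]
  rw [tau, Finset.smul_sum]
  symm
  refine Finset.sum_of_injOn (fun j ↦ ⟨r - j, by omega⟩) ?_ (by simp [Set.MapsTo]) ?_ ?_
  · intro i hi j hj hij
    simp only [coe_range, Set.mem_Iio, Fin.mk.injEq] at hi hj hij
    omega
  · intro i _ hi
    have : r < i := by
      by_contra! hle
      exact hi ⟨r - i, mem_coe.mpr (mem_range.mpr (by omega)), Fin.ext (Nat.sub_sub_self hle)⟩
    rw [Nat.descFactorial_of_lt this]
    simp
  · intro j hj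
    obtain ⟨l, rfl⟩ := Nat.exists_eq_add_of_le (Finset.mem_range_succ_iff.mp hj)
    rw [mul_smul_comm, smul_smul, smul_smul, tau_coeff_mul]
    simp only [Nat.add_sub_cancel_left, Nat.add_sub_cancel_right]

theorem weitzContraction_mem {T : Submodule k (MvPolynomial (Fin (n + 1)) k)} {m : ℕ}
    (tau_mem : ∀ z : MvPolynomial (Fin (n + 1)) k, z.IsHomogeneous m → weitz k n z = 0 →
      ∀ w : ℕ, ee k n z = (w : k) • z → ∀ (i : ℕ) (hi : i ≤ n), i ≤ w → tau k n w i hi z ∈ T)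
    {p : MvPolynomial (Fin (n + 1)) k} {u : ℤ} (hp : p.IsHomogeneous m)
    (hu : ee k n p = (u : k) • p) (hker : (weitz k n)^[n + 1] p = 0) :
    weitzContraction k n p ∈ T := by
  rcases eq_or_ne n 0 with rfl | hn
  -- `IsSl2Triple` requires `h ≠ 0`, whereas `ee k 0 = 0`.
  · have ee_eq_zero : ee k 0 p = ((0 : ℕ) : k) • p := by
      have : ee k 0 = 0 := derivation_ext fun i ↦ by simp [ee_X, Fin.fin_one_eq_zero i]
      rw [this]
      simp
    have tau_zero_mem := tau_mem p hp hker 0 ee_eq_zero 0 le_rfl le_rfl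
    simpa [weitzContraction_apply, tau] using tau_zero_mem
  · have string_mem (r : ℕ) (hr : r < n + 1) (v : ℕ) (z : MvPolynomial (Fin (n + 1)) k)
        (hzm : z.IsHomogeneous m) (hzw : ee k n z = ((r + v : ℕ) : k) • z)
        (hzker : weitz k n z = 0) : weitzContraction k n ((dhat k n)^[r] z) ∈ T := by
      rw [weitzContraction_iterate_dhat hn (Nat.le_of_lt_succ hr) hzker hzw]
      exact T.smul_mem _ (tau_mem z hzm hzker _ hzw r _ (Nat.le_add_right r v))
    have exists_pow (q : MvPolynomial (Fin (n + 1)) k) :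
        ∃ N, (LieModule.toEnd k (Derivation k _ _) _ (dhat k n) ^ N) q = 0 := by
      simpa only [toEnd_derivation_pow_apply] using exists_iterate_dhat_eq_zero q
    rw [← toEnd_derivation_pow_apply] at hker
    simp only [← toEnd_derivation_pow_apply] at string_mem
    exact mem_of_toEnd_e_pow_eq_zero (isSl2Triple_weitz (k := k) hn) exists_pow
      (H := homogeneousSubmodule (Fin (n + 1)) k m) (S := T.comap (weitzContraction k n))
      (fun _ ↦ isHomogeneous_derivation isHomogeneous_weitz_X)
      (fun _ ↦ isHomogeneous_derivation isHomogeneous_dhat_X) string_mem hp hu hker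

theorem mem_of_isHomogeneous_of_weitz_eq_zero
    {T : Submodule k (MvPolynomial (Fin (n + 1)) k)} (one_mem : 1 ∈ T)
    (hclosed : ∀ z ∈ T, z ≠ 0 → ∀ m : ℕ, z.IsHomogeneous m → weitz k n z = 0 →
      ∀ w : ℕ, ee k n z = (w : k) • z → ∀ (i : ℕ) (hi : i ≤ n), i ≤ w → tau k n w i hi z ∈ T)
    {m : ℕ} {p : MvPolynomial (Fin (n + 1)) k} (hp : p.IsHomogeneous m)
    (hker : weitz k n p = 0) : p ∈ T := by
  induction m generalizing p with
  | zero =>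
    obtain ⟨c, rfl⟩ : ∃ c, p = C c :=
      ⟨_, totalDegree_eq_zero_iff_eq_C.mp ((totalDegree_zero_iff_isHomogeneous _).mpr hp)⟩
    rw [← mul_one (C c), ← smul_eq_C_mul]
    exact T.smul_mem c one_mem
  | succ m ih =>
    refine mem_of_forall_weightedHomogeneousComponent_mem (varWeight n) fun u ↦ ?_
    set q := weightedHomogeneousComponent (varWeight n) u p
    have q_homogeneous : q.IsHomogeneous (m + 1) :=
      isHomogeneous_weightedHomogeneousComponent hp u
    have q_weight : IsWeightedHomogeneous (varWeight n) q u :=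
      weightedHomogeneousComponent_isWeightedHomogeneous u p
    have q_ker : weitz k n q = 0 := by
      rw [derivation_weightedHomogeneousComponent isWeightedHomogeneous_weitz_X, hker, map_zero]
    have tau_mem (z : MvPolynomial (Fin (n + 1)) k) (hzm : z.IsHomogeneous m)
        (hzker : weitz k n z = 0) (w : ℕ) (hzw : ee k n z = (w : k) • z)
        (i : ℕ) (hi : i ≤ n) (hiw : i ≤ w) : tau k n w i hi z ∈ T := by
      rcases eq_or_ne z 0 with rfl | hz
      · simp [tau, iterate_map_zero]
      · exact hclosed z (ih hzm hzker) hz m hzm hzker w hzw i hi hiw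
    have contraction_mem : weitzContraction k n (pderiv 0 q) ∈ T :=
      weitzContraction_mem tau_mem q_homogeneous.pderiv
        (ee_apply_of_isWeightedHomogeneous (q_weight.pderiv (sub_add_cancel u _)))
        (iterate_weitz_pderiv_zero_eq_zero q_ker)
    rw [weitzContraction_pderiv_zero q_homogeneous q_ker] at contraction_mem
    exact (T.smul_mem_iff (Nat.cast_ne_zero.mpr m.succ_ne_zero)).mp contraction_mem

end Weitzenboeck

theorem subalgebra_closed_under_tau_eq_kernel_general (k : Type*) [Field k] [CharZero k]
    (n : ℕ) (T : Submodule k (MvPolynomial (Fin (n + 1)) k)) (one_mem : 1 ∈ T)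
    (hclosed : ∀ (z : MvPolynomial (Fin (n + 1)) k), z ∈ T → z ≠ 0 →
      ∀ m : ℕ, z.IsHomogeneous m → weitz k n z = 0 →
      ∀ w : ℕ, ee k n z = (w : k) • z →
      ∀ (i : ℕ) (hin : i ≤ n), i ≤ w → tau k n w i hin z ∈ T)
    {p : MvPolynomial (Fin (n + 1)) k} (hp : weitz k n p = 0) : p ∈ T := by
  refine mem_of_forall_weightedHomogeneousComponent_mem (1 : Fin (n + 1) → ℕ) fun m ↦ ?_
  have component_ker : weitz k n (homogeneousComponent m p) = 0 := by
    rw [derivation_homogeneousComponent isHomogeneous_weitz_X, hp, map_zero]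
  exact mem_of_isHomogeneous_of_weitz_eq_zero one_mem hclosed
    (homogeneousComponent_isHomogeneous m p) component_ker

/-- If `T` is a subalgebra of the kernel of the Weitzenböck
derivation `d` containing `x_0` and closed under all the Casimir maps `τ_i`,
then `T` is the whole kernel: `f ∈ T ↔ d(f) = 0`. -/
theorem subalgebra_closed_under_tau_eq_kernel (k : Type*) [Field k] [CharZero k]
    (n : ℕ) (T : Subalgebra k (MvPolynomial (Fin (n + 1)) k))
    (hker : ∀ f ∈ T, weitz k n f = 0)
    (hx0 : (X 0 : MvPolynomial (Fin (n + 1)) k) ∈ T)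
    (hclosed : ∀ (z : MvPolynomial (Fin (n + 1)) k), z ∈ T → z ≠ 0 →
      ∀ m : ℕ, z.IsHomogeneous m → weitz k n z = 0 →
      ∀ w : ℕ, ee k n z = (w : k) • z →
      ∀ (i : ℕ) (hin : i ≤ n), i ≤ w → tau k n w i hin z ∈ T) :
    ∀ f : MvPolynomial (Fin (n + 1)) k, f ∈ T ↔ weitz k n f = 0 := by
  exact fun f ↦ ⟨hker f, subalgebra_closed_under_tau_eq_kernel_general k n
    (Subalgebra.toSubmodule T) T.one_mem hclosed⟩
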